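/- arXiv:2202.10383 — 2 statements merged into one kernel-verified Lean document; each statement's English description precedes it below -/
import Mathlib

section
/- Let ALLcomm′ denote the scheme obtained from ALLcomm (∀x∀yφ → ∀y∀xφ) by adding the DV condition {x,y}. Then the scheme ALLcomm is not provable from (TMM ∖ {spec, ALLcomm, ALLeq}) ∪ {ALLcomm′}; in particular, ALLcomm is independent in the axiom system TMM ∖ {spec, ALLeq}, i.e., it is not provable from TMM ∖ {spec, ALLcomm, ALLeq}. -/
set_option autoImplicit false

/-! ## Megill-style scheme-level formalization of first-order logic -/

/-- Metavariables: variable metavariables `vr i` (standing for x_i) and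
formula metavariables `fm i` (standing for φ_i). -/
inductive MV : Type
  | vr (i : ℕ) : MV
  | fm (i : ℕ) : MV
  deriving DecidableEq

/-- Metaformulas over the pure language of equality. -/
inductive MF : Type
  | phi (i : ℕ) : MF
  | eq (i j : ℕ) : MF
  | imp (a b : MF) : MF
  | not (a : MF) : MF
  | all (i : ℕ) (a : MF) : MF
  deriving DecidableEq

/-- The set of metavariables occurring in a metaformula. -/
def MF.OC : MF → Set MV
  | .phi i => {MV.fm i}
  | .eq i j => {MV.vr i, MV.vr j}
  | .imp a b => a.OC ∪ b.OC
  | .not a => a.OC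
  | .all i a => insert (MV.vr i) a.OC

/-- A scheme: finitely many hypotheses, a conclusion, and disjoint-variable
(DV) conditions given as unordered pairs of metavariables. -/
structure Scheme : Type where
  hyps : Finset MF
  concl : MF
  dv : Set (Sym2 MV)

/-- Metavariables occurring in a scheme (in its hypotheses or conclusion). -/
def Scheme.OC (Φ : Scheme) : Set MV :=
  {m | ∃ h ∈ Φ.hyps, m ∈ h.OC} ∪ Φ.concl.OC

/-- A (type-preserving) substitution: variable metavariables go to variable
metavariables, formula metavariables go to metaformulas; it is the identity
outside a finite set. -/
structure Subst : Type where
  vr : ℕ → ℕ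
  fm : ℕ → MF
  finVr : {i : ℕ | vr i ≠ i}.Finite
  finFm : {i : ℕ | fm i ≠ MF.phi i}.Finite

/-- Action of a substitution on a metaformula. -/
def MF.substMF (σ : Subst) : MF → MF
  | .phi i => σ.fm i
  | .eq i j => .eq (σ.vr i) (σ.vr j)
  | .imp a b => .imp (a.substMF σ) (b.substMF σ)
  | .not a => .not (a.substMF σ)
  | .all i a => .all (σ.vr i) (a.substMF σ)

/-- The set of metavariables occurring in the image of a metavariable. -/
def Subst.appMV (σ : Subst) : MV → Set MV
  | .vr i => {MV.vr (σ.vr i)}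
  | .fm i => (σ.fm i).OC

/-- σ is the identity on a given metavariable. -/
def Subst.Fixes (σ : Subst) : MV → Prop
  | .vr i => σ.vr i = i
  | .fm i => σ.fm i = MF.phi i

/-- A substitution is legitimate on a scheme if it does not violate its
DV conditions. -/
def Subst.Legit (σ : Subst) (Φ : Scheme) : Prop :=
  ∀ m n : MV, s(m, n) ∈ Φ.dv → σ.appMV m ∩ σ.appMV n = ∅

/-- Propagation of DV conditions along a substitution. -/
def Subst.dvMap (σ : Subst) (D : Set (Sym2 MV)) : Set (Sym2 MV) :=
  {q | ∃ m' n' m n : MV, s(m', n') ∈ D ∧ m ∈ σ.appMV m' ∧ n ∈ σ.appMV n' ∧ q = s(m, n)}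

/-- Action of a substitution on a scheme. -/
def Scheme.substS (Φ : Scheme) (σ : Subst) : Scheme :=
  ⟨Φ.hyps.image (MF.substMF σ), Φ.concl.substMF σ, σ.dvMap Φ.dv⟩

/-- `Φ.Inst Ψ` : Ψ is an instance of Φ, i.e. the result of a legitimate
substitution, possibly followed by the addition of DV conditions. -/
def Scheme.Inst (Φ Ψ : Scheme) : Prop :=
  ∃ σ : Subst, σ.Legit Φ ∧ Ψ.hyps = Φ.hyps.image (MF.substMF σ) ∧
    Ψ.concl = Φ.concl.substMF σ ∧ σ.dvMap Φ.dv ⊆ Ψ.dv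

/-- Metavariables occurring in a list of metaformulas. -/
def listOC (P : List MF) : Set MV := {m | ∃ f ∈ P, m ∈ f.OC}

/-- The DV conditions of a proof `P` of the scheme `Φ`: those of `Φ`, plus all
pairs {m, n} where m is a dummy metavariable of `P` and n occurs in `P`. -/
def proofDV (Φ : Scheme) (P : List MF) : Set (Sym2 MV) :=
  Φ.dv ∪ {q | ∃ m n : MV, m ∈ listOC P ∧ m ∉ Φ.OC ∧ n ∈ listOC P ∧ q = s(m, n)}

/-- `P` is a proof of the scheme `Φ` from the set `S` of schemes. -/
def IsProof (S : Set Scheme) (Φ : Scheme) (P : List MF) : Prop :=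
  P ≠ [] ∧ P.getLast? = some Φ.concl ∧
  ∀ (k : ℕ) (hk : k < P.length),
    P.get ⟨k, hk⟩ ∈ Φ.hyps ∨
    ∃ hs : Finset MF,
      (∀ h ∈ hs, ∃ (l : ℕ) (hl : l < k), P.get ⟨l, hl.trans hk⟩ = h) ∧
      ∃ Ξ ∈ S, Ξ.Inst ⟨hs, P.get ⟨k, hk⟩, proofDV Φ P⟩

/-- `S ⊢ Φ` : the scheme `Φ` is provable from the set `S` of schemes. -/
def Provable (S : Set Scheme) (Φ : Scheme) : Prop := ∃ P : List MF, IsProof S Φ P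

/-! ## Object level: first-order formulas and semantics -/

/-- First-order formulas over the pure language of equality, with
individual variables v_i. -/
inductive FM : Type
  | eq (i j : ℕ) : FM
  | imp (a b : FM) : FM
  | not (a : FM) : FM
  | all (i : ℕ) (a : FM) : FM
  deriving DecidableEq

/-- Variables occurring in a first-order formula. -/
def FM.vars : FM → Set ℕ
  | .eq i j => {i, j}
  | .imp a b => a.vars ∪ b.vars
  | .not a => a.vars
  | .all i a => insert i a.vars

/-- An object-substitution: variable metavariables go to individual variables,
formula metavariables go to first-order formulas. -/
structure OSubst : Type where
  vr : ℕ → ℕ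
  fm : ℕ → FM

/-- Action of an object-substitution on a metaformula, yielding a first-order
formula (an object-instance). -/
def MF.osubst (τ : OSubst) : MF → FM
  | .phi i => τ.fm i
  | .eq i j => .eq (τ.vr i) (τ.vr j)
  | .imp a b => .imp (a.osubst τ) (b.osubst τ)
  | .not a => .not (a.osubst τ)
  | .all i a => .all (τ.vr i) (a.osubst τ)

/-- Variables occurring in the image of a metavariable. -/
def OSubst.appVars (τ : OSubst) : MV → Set ℕ
  | .vr i => {τ.vr i}
  | .fm i => (τ.fm i).vars

/-- An object-substitution is legitimate on a scheme if images of DV-paired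
metavariables share no variables. -/
def OSubst.Legit (τ : OSubst) (Φ : Scheme) : Prop :=
  ∀ m n : MV, s(m, n) ∈ Φ.dv → τ.appVars m ∩ τ.appVars n = ∅

/-- Evaluation of a first-order formula in a structure with domain `D`
(equality interpreted as equality) under an assignment `ρ`. -/
def FM.eval {D : Type} (ρ : ℕ → D) : FM → Prop
  | .eq i j => ρ i = ρ j
  | .imp a b => a.eval ρ → b.eval ρ
  | .not a => ¬ a.eval ρ
  | .all i a => ∀ d : D, a.eval (Function.update ρ i d)

/-- Validity of a first-order formula in the structure with domain `D`. -/
def FM.Valid (D : Type) (f : FM) : Prop := ∀ ρ : ℕ → D, f.eval ρ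

/-- A scheme is true if for every legitimate object-instance and every
nonempty domain, the conclusion is valid whenever all hypotheses are. -/
def Scheme.IsTrue (Φ : Scheme) : Prop :=
  ∀ τ : OSubst, τ.Legit Φ →
    ∀ D : Type, Nonempty D →
      (∀ h ∈ Φ.hyps, FM.Valid D (h.osubst τ)) → FM.Valid D (Φ.concl.osubst τ)

/-! ## (i,j)-transforms and supertruth -/

/-- Auxiliary: (i,j)-transform with a flag recording whether we are inside the
scope of a quantifier ∀x_i. -/
def MF.transfAux (i j : ℕ) : MF → Bool → MF
  | .phi k, _ => .phi k
  | .eq a b, ins =>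
      .eq (if ins = true ∧ a = j then i else a) (if ins = true ∧ b = j then i else b)
  | .imp a b, ins => .imp (a.transfAux i j ins) (b.transfAux i j ins)
  | .not a, ins => .not (a.transfAux i j ins)
  | .all k a, ins =>
      .all (if ins = true ∧ k = j then i else k) (a.transfAux i j (ins || decide (k = i)))

/-- The (i,j)-transform of a metaformula: replace every occurrence of x_j
lying within the scope of a quantifier ∀x_i by x_i. -/
def MF.transform (i j : ℕ) (f : MF) : MF := f.transfAux i j false

/-- The (i,j)-transform of a scheme: transform hypotheses and conclusion,
keep the DV conditions. -/
def Scheme.transform (i j : ℕ) (Φ : Scheme) : Scheme :=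
  ⟨Φ.hyps.image (MF.transform i j), Φ.concl.transform i j, Φ.dv⟩

/-- The (i,j)-transform (and the {i,j}-transform) is legitimate on a scheme
if {x_i, x_j} is not among its DV conditions. -/
def Scheme.TLegit (i j : ℕ) (Φ : Scheme) : Prop := s(MV.vr i, MV.vr j) ∉ Φ.dv

/-- A (hypothesis-free) scheme is presupertrue if all the legitimate
(i,j)-transforms of all its instances (including itself) are true. -/
def Scheme.PreST (Φ : Scheme) : Prop :=
  ∀ Ψ : Scheme, (Ψ = Φ ∨ Φ.Inst Ψ) → ∀ i j : ℕ, Ψ.TLegit i j → (Ψ.transform i j).IsTrue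

/-- A scheme is supertrue if every instance of it (including itself) satisfies:
whenever all legitimate (i,j)-transforms of all instances of each of its
hypotheses (taken as hypothesis-free schemes with the inherited DV conditions)
are true, all legitimate (i,j)-transforms of all instances of its conclusion
are true. -/
def Scheme.Supertrue (Φ : Scheme) : Prop :=
  ∀ Ψ : Scheme, (Ψ = Φ ∨ Φ.Inst Ψ) →
    (∀ h ∈ Ψ.hyps, Scheme.PreST ⟨∅, h, Ψ.dv⟩) → Scheme.PreST ⟨∅, Ψ.concl, Ψ.dv⟩

/-- The {i,j}-transform of a metaformula: the composite of the (i,j)-transform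
and the (j,i)-transform, the one with smaller first index performed first. -/
def MF.stransform (i j : ℕ) (f : MF) : MF :=
  if i ≤ j then (f.transform i j).transform j i else (f.transform j i).transform i j

/-- The {i,j}-transform of a scheme. -/
def Scheme.stransform (i j : ℕ) (Φ : Scheme) : Scheme :=
  ⟨Φ.hyps.image (MF.stransform i j), Φ.concl.stransform i j, Φ.dv⟩

/-- A metaformula contains no formula metavariables. -/
def MF.FmFree : MF → Prop
  | .phi _ => False
  | .eq _ _ => True
  | .imp a b => a.FmFree ∧ b.FmFree
  | .not a => a.FmFree
  | .all _ a => a.FmFree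

/-- A scheme contains no formula metavariables. -/
def Scheme.FmFree (Φ : Scheme) : Prop := (∀ h ∈ Φ.hyps, h.FmFree) ∧ Φ.concl.FmFree

/-- A (hypothesis-free) scheme is pre-semisupertrue if all the legitimate
{i,j}-transforms of all its instances (including itself) are true. -/
def Scheme.PreSST (Φ : Scheme) : Prop :=
  ∀ Ψ : Scheme, (Ψ = Φ ∨ Φ.Inst Ψ) → ∀ i j : ℕ, Ψ.TLegit i j → (Ψ.stransform i j).IsTrue

/-- A scheme is semisupertrue if it is true and every formula-metavariable-free
instance of it satisfies: whenever all legitimate {i,j}-transforms of all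
instances of each of its hypotheses are true, all legitimate {i,j}-transforms
of all instances of its conclusion are true. -/
def Scheme.Semisupertrue (Φ : Scheme) : Prop :=
  Φ.IsTrue ∧
  ∀ Ψ : Scheme, (Ψ = Φ ∨ Φ.Inst Ψ) → Ψ.FmFree →
    (∀ h ∈ Ψ.hyps, Scheme.PreSST ⟨∅, h, Ψ.dv⟩) → Scheme.PreSST ⟨∅, Ψ.concl, Ψ.dv⟩

/-- A metaformula is quantifier-free. -/
def MF.QFree : MF → Prop
  | .phi _ => True
  | .eq _ _ => True
  | .imp a b => a.QFree ∧ b.QFree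
  | .not a => a.QFree
  | .all _ _ => False

/-- A scheme is quantifier-free. -/
def Scheme.QFree (Φ : Scheme) : Prop := (∀ h ∈ Φ.hyps, h.QFree) ∧ Φ.concl.QFree

/-! ## The axiom schemes of the system TMM
(x = x_0, y = x_1, z = x_2; φ = φ_0, ψ = φ_1, χ = φ_2, θ = φ_3, τ = φ_4) -/

def ax_mp : Scheme := ⟨{.phi 0, .imp (.phi 0) (.phi 1)}, .phi 1, ∅⟩

def ax_minimp : Scheme :=
  ⟨∅, .imp (.phi 0) (.imp (.imp (.phi 1) (.phi 2))
      (.imp (.imp (.imp (.phi 3) (.phi 1)) (.imp (.phi 2) (.phi 4)))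
        (.imp (.phi 1) (.phi 4)))), ∅⟩

def ax_peirce : Scheme := ⟨∅, .imp (.imp (.imp (.phi 0) (.phi 1)) (.phi 0)) (.phi 0), ∅⟩

def ax_contrap : Scheme :=
  ⟨∅, .imp (.imp (.phi 0) (.not (.phi 1))) (.imp (.phi 1) (.not (.phi 0))), ∅⟩

def ax_notelim : Scheme := ⟨∅, .imp (.not (.phi 0)) (.imp (.phi 0) (.phi 1)), ∅⟩

def ax_gen : Scheme := ⟨{.phi 0}, .all 0 (.phi 0), ∅⟩

def ax_ALLdistr : Scheme :=
  ⟨∅, .imp (.all 0 (.imp (.phi 0) (.phi 1))) (.imp (.all 0 (.phi 0)) (.all 0 (.phi 1))), ∅⟩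

def ax_spec : Scheme := ⟨∅, .imp (.all 0 (.phi 0)) (.phi 0), ∅⟩

def ax_modal5 : Scheme :=
  ⟨∅, .imp (.not (.all 0 (.phi 0))) (.all 0 (.not (.all 0 (.phi 0)))), ∅⟩

def ax_vacGen : Scheme := ⟨∅, .imp (.phi 0) (.all 0 (.phi 0)), {s(MV.vr 0, MV.fm 0)}⟩

def ax_ALLcomm : Scheme :=
  ⟨∅, .imp (.all 0 (.all 1 (.phi 0))) (.all 1 (.all 0 (.phi 0))), ∅⟩

def ax_EQrefl : Scheme := ⟨∅, .eq 0 0, ∅⟩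

def ax_EQsymm : Scheme := ⟨∅, .imp (.eq 0 1) (.eq 1 0), ∅⟩

def ax_EQtrans : Scheme := ⟨∅, .imp (.eq 0 1) (.imp (.eq 1 2) (.eq 0 2)), ∅⟩

def ax_denot : Scheme :=
  ⟨∅, .imp (.eq 0 0) (.not (.all 1 (.not (.eq 1 0)))), {s(MV.vr 0, MV.vr 1)}⟩

def ax_subst : Scheme :=
  ⟨∅, .all 0 (.imp (.eq 0 1) (.imp (.phi 0) (.all 0 (.imp (.eq 0 1) (.phi 0))))),
    {s(MV.vr 0, MV.vr 1), s(MV.vr 1, MV.fm 0)}⟩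

def ax_ALLeq : Scheme :=
  ⟨∅, .imp (.all 0 (.eq 0 1)) (.imp (.all 0 (.phi 0)) (.all 1 (.phi 0))), ∅⟩

def ax_genEq : Scheme :=
  ⟨∅, .imp (.not (.all 0 (.eq 0 1)))
      (.imp (.not (.all 0 (.eq 0 2))) (.imp (.eq 1 2) (.all 0 (.eq 1 2)))), ∅⟩

def ax_modalD : Scheme := ⟨∅, .imp (.all 0 (.not (.phi 0))) (.not (.all 0 (.phi 0))), ∅⟩

def ax_modal4 : Scheme := ⟨∅, .imp (.all 0 (.phi 0)) (.all 0 (.all 0 (.phi 0))), ∅⟩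

/-- The system TMM. -/
def TMM : Set Scheme :=
  {ax_mp, ax_minimp, ax_peirce, ax_contrap, ax_notelim, ax_gen, ax_ALLdistr, ax_spec,
   ax_modal5, ax_vacGen, ax_ALLcomm, ax_EQrefl, ax_EQsymm, ax_EQtrans, ax_denot,
   ax_subst, ax_ALLeq, ax_genEq}

/-- The subsystem T. -/
def Tsys : Set Scheme :=
  {ax_mp, ax_minimp, ax_peirce, ax_contrap, ax_notelim, ax_gen, ax_ALLdistr, ax_vacGen,
   ax_EQrefl, ax_EQsymm, ax_EQtrans, ax_denot}

/-- ALLcomm weakened by the DV condition {x, y}. -/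
def ax_ALLcomm' : Scheme :=
  ⟨∅, .imp (.all 0 (.all 1 (.phi 0))) (.all 1 (.all 0 (.phi 0))),
    {s(MV.vr 0, MV.vr 1)}⟩

/-! ## A non-standard semantics

We evaluate the (0,1)-transform of a metaformula directly, over the two-element domain; `φ_0` is
read as "x_1 is true", and the other formula metavariables as true. -/

/-- Renaming of variables: inside the scope of a quantifier on x_0, read x_1 as x_0. -/
def rnm (ins : Bool) (a : ℕ) : ℕ := if ins = true ∧ a = 1 then 0 else a

/-- Evaluation of the transform. -/
def ev : MF → Bool → (ℕ → Bool) → Prop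
  | .phi i, _, ρ => i = 0 → ρ 1 = true
  | .eq a b, ins, ρ => ρ (rnm ins a) = ρ (rnm ins b)
  | .imp a b, ins, ρ => ev a ins ρ → ev b ins ρ
  | .not a, ins, ρ => ¬ ev a ins ρ
  | .all k a, ins, ρ => ∀ d : Bool, ev a (ins || decide (k = 0)) (Function.update ρ (rnm ins k) d)

/-- Validity for the non-standard semantics. -/
def Vd (f : MF) : Prop := ∀ ins ρ, ev f ins ρ

/-- The metavariables occurring in ALLcomm. -/
def core (m : MV) : Prop := m = MV.vr 0 ∨ m = MV.vr 1 ∨ m = MV.fm 0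

lemma core_of_mem (m : MV) (h : core m) : m ∈ ax_ALLcomm.OC := by
  rcases h with rfl | rfl | rfl <;> simp [ax_ALLcomm, Scheme.OC, MF.OC]

lemma dv_core (P : List MF) (a b : MV) (h : s(a, b) ∈ proofDV ax_ALLcomm P)
    (ha : core a) (hb : core b) : False := by
  rcases h with h | ⟨m, n, -, hm, -, hq⟩
  · simp [ax_ALLcomm] at h
  · rcases Sym2.eq_iff.1 hq with ⟨rfl, rfl⟩ | ⟨rfl, rfl⟩
    · exact hm (core_of_mem _ ha)
    · exact hm (core_of_mem _ hb)

lemma rnm_ge (ins : Bool) (k : ℕ) (hk : 2 ≤ k) : rnm ins k = k := by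
  unfold rnm; split_ifs <;> omega

lemma rnm_lt (ins : Bool) (k : ℕ) (hk : k < 2) : rnm ins k < 2 := by
  unfold rnm; split_ifs <;> omega

lemma rnm_or (ins : Bool) (k : ℕ) : rnm (ins || decide (k = 0)) k = rnm ins k := by
  by_cases h : k = 0
  · subst h; simp [rnm]
  · simp [h]

lemma ev_congr_ge (f : MF) (k : ℕ) (hk : 2 ≤ k) (hf : MV.vr k ∉ f.OC) :
    ∀ (ins : Bool) (ρ ρ' : ℕ → Bool), (∀ n, n ≠ k → ρ n = ρ' n) → (ev f ins ρ ↔ ev f ins ρ') := by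
  induction f with
  | phi i =>
    intro ins ρ ρ' h
    simp only [ev]
    rw [h 1 (by omega)]
  | eq a b =>
    intro ins ρ ρ' h
    simp only [MF.OC, Set.mem_insert_iff, Set.mem_singleton_iff, MV.vr.injEq, not_or] at hf
    have aux : ∀ c, k ≠ c → rnm ins c ≠ k := by
      intro c hc; unfold rnm; split_ifs <;> omega
    simp only [ev]
    rw [h _ (aux a hf.1), h _ (aux b hf.2)]
  | imp a b iha ihb =>
    intro ins ρ ρ' h
    simp only [MF.OC, Set.mem_union, not_or] at hf
    simp only [ev]
    rw [iha hf.1 ins ρ ρ' h, ihb hf.2 ins ρ ρ' h]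
  | not a iha =>
    intro ins ρ ρ' h
    simp only [ev]
    rw [iha hf ins ρ ρ' h]
  | all l a iha =>
    intro ins ρ ρ' h
    simp only [MF.OC, Set.mem_insert_iff, not_or] at hf
    simp only [ev]
    refine forall_congr' fun d => iha hf.2 _ _ _ fun n hn => ?_
    simp only [Function.update_apply]
    split_ifs
    · rfl
    · exact h n hn

lemma ev_congr_core (f : MF) (hf : ∀ m ∈ f.OC, ¬ core m) :
    ∀ (i j : Bool) (ρ ρ' : ℕ → Bool), (∀ n, 2 ≤ n → ρ n = ρ' n) → (ev f i ρ ↔ ev f j ρ') := by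
  have ge : ∀ a, ¬ core (MV.vr a) → 2 ≤ a := by
    intro a h
    by_contra hlt
    obtain rfl | rfl : a = 0 ∨ a = 1 := by omega
    · exact h (Or.inl rfl)
    · exact h (Or.inr (Or.inl rfl))
  induction f with
  | phi i =>
    intro _ _ ρ ρ' h
    have : i ≠ 0 := by
      rintro rfl
      exact hf (MV.fm 0) (by simp [MF.OC]) (Or.inr (Or.inr rfl))
    simp [ev, this]
  | eq a b =>
    intro i j ρ ρ' h
    have ha := ge a (hf _ (by simp [MF.OC]))
    have hb := ge b (hf _ (by simp [MF.OC]))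
    simp only [ev]
    rw [rnm_ge _ _ ha, rnm_ge _ _ hb, rnm_ge _ _ ha, rnm_ge _ _ hb, h a ha, h b hb]
  | imp a b iha ihb =>
    intro i j ρ ρ' h
    simp only [ev]
    rw [iha (fun m hm => hf m (Or.inl hm)) i j ρ ρ' h,
      ihb (fun m hm => hf m (Or.inr hm)) i j ρ ρ' h]
  | not a iha =>
    intro i j ρ ρ' h
    simp only [ev]
    rw [iha hf i j ρ ρ' h]
  | all l a iha =>
    intro i j ρ ρ' h
    have hl := ge l (hf _ (by simp [MF.OC]))
    simp only [ev]
    refine forall_congr' fun d => iha (fun m hm => hf m (Or.inr hm)) _ _ _ _ fun n hn => ?_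
    rw [rnm_ge _ _ hl, rnm_ge _ _ hl]
    simp only [Function.update_apply]
    split_ifs
    · rfl
    · exact h n hn

/-- What a DV condition between two variables gives us. -/
lemma dv_vars (P : List MF) (k l : ℕ) (hne : k ≠ l)
    (h : s(MV.vr k, MV.vr l) ∈ proofDV ax_ALLcomm P) (i j : Bool) : rnm i k ≠ rnm j l := by
  have : ¬ (k < 2 ∧ l < 2) := by
    rintro ⟨hk, hl⟩
    refine dv_core P _ _ h ?_ ?_
    · obtain rfl | rfl : k = 0 ∨ k = 1 := by omega
      · exact Or.inl rfl
      · exact Or.inr (Or.inl rfl)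
    · obtain rfl | rfl : l = 0 ∨ l = 1 := by omega
      · exact Or.inl rfl
      · exact Or.inr (Or.inl rfl)
  unfold rnm
  split_ifs <;> omega

/-- The renaming of the other variable does not see the flag set by a disjoint quantifier. -/
lemma dv_flag (P : List MF) (k l : ℕ)
    (h : s(MV.vr k, MV.vr l) ∈ proofDV ax_ALLcomm P) (ins : Bool) :
    rnm (ins || decide (k = 0)) l = rnm ins l := by
  by_cases hk : k = 0
  · subst hk
    have : l ≠ 1 := by
      rintro rfl
      exact dv_core P _ _ h (Or.inl rfl) (Or.inr (Or.inl rfl))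
    simp [rnm, this]
  · simp [hk]

/-- The system in question. -/
def Sys : Set Scheme := (TMM \ {ax_spec, ax_ALLcomm, ax_ALLeq}) ∪ {ax_ALLcomm'}

lemma legit_vars (σ : Subst) (Ξ : Scheme) (k l : ℕ) (hL : σ.Legit Ξ)
    (h : s(MV.vr k, MV.vr l) ∈ Ξ.dv) : σ.vr k ≠ σ.vr l := by
  intro e
  have := hL _ _ h
  simp [Subst.appMV, e] at this

lemma map_vars (σ : Subst) (D : Set (Sym2 MV)) (k l : ℕ)
    (h : s(MV.vr k, MV.vr l) ∈ D) : s(MV.vr (σ.vr k), MV.vr (σ.vr l)) ∈ σ.dvMap D :=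
  ⟨_, _, _, _, h, rfl, rfl, rfl⟩

lemma vacGen_sound (P : List MF) (k : ℕ) (f : MF) (hk : MV.vr k ∉ f.OC)
    (h : ∀ m ∈ f.OC, s(MV.vr k, m) ∈ proofDV ax_ALLcomm P) : Vd (.imp f (.all k f)) := by
  intro ins ρ hf d
  by_cases h2 : 2 ≤ k
  · have hk0 : k ≠ 0 := by omega
    rw [rnm_ge _ _ h2]
    simp only [hk0, decide_false, Bool.or_false]
    refine (ev_congr_ge f k h2 hk ins _ _ fun n hn => ?_).1 hf
    simp [hn]
  · have hc : core (MV.vr k) := by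
      obtain rfl | rfl : k = 0 ∨ k = 1 := by omega
      · exact Or.inl rfl
      · exact Or.inr (Or.inl rfl)
    refine (ev_congr_core f (fun m hm hcm => dv_core P _ _ (h m hm) hc hcm) _ _ _ _
      fun n hn => ?_).1 hf
    have := rnm_lt ins k (by omega)
    rw [Function.update_of_ne (by omega)]

lemma comm_sound (P : List MF) (k l : ℕ) (f : MF) (hne : k ≠ l)
    (h : s(MV.vr k, MV.vr l) ∈ proofDV ax_ALLcomm P) :
    Vd (.imp (.all k (.all l f)) (.all l (.all k f))) := by
  intro ins ρ hf d e
  have := hf e d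
  rw [dv_flag P k l h] at this
  rw [dv_flag P l k (by rwa [Sym2.eq_swap])]
  rw [Function.update_comm (dv_vars P k l hne h ins ins)] at this
  have hb : (ins || decide (k = 0) || decide (l = 0)) = (ins || decide (l = 0) || decide (k = 0)) := by
    rw [Bool.or_assoc, Bool.or_assoc, Bool.or_comm (decide (k = 0))]
  rw [hb] at this
  exact this

lemma denot_sound (P : List MF) (k l : ℕ) (hne : k ≠ l)
    (h : s(MV.vr k, MV.vr l) ∈ proofDV ax_ALLcomm P) :
    Vd (.imp (.eq k k) (.not (.all l (.not (.eq l k))))) := by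
  intro ins ρ _ hf
  refine hf (ρ (rnm ins k)) ?_
  simp only [ev]
  rw [rnm_or, dv_flag P l k (by rwa [Sym2.eq_swap]), Function.update_self,
    Function.update_of_ne (dv_vars P k l hne h ins ins)]

lemma subst_sound (P : List MF) (k l : ℕ) (f : MF) (hne : k ≠ l)
    (h : s(MV.vr k, MV.vr l) ∈ proofDV ax_ALLcomm P) :
    Vd (.all k (.imp (.eq k l) (.imp f (.all k (.imp (.eq k l) f))))) := by
  intro ins ρ d
  simp only [ev]
  intro h1 h2 e h3
  have hd := dv_vars P k l hne h ins ins
  simp only [rnm_or, dv_flag P k l h, Bool.or_assoc, Bool.or_self] at h1 h2 h3 ⊢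
  rw [Function.update_self, Function.update_of_ne hd.symm] at h1
  rw [Function.update_idem] at h3 ⊢
  rw [Function.update_self, Function.update_of_ne hd.symm] at h3
  rw [h3, ← h1]
  exact h2

lemma genEq_sound (k l m : ℕ) :
    Vd (.imp (.not (.all k (.eq k l)))
      (.imp (.not (.all k (.eq k m))) (.imp (.eq l m) (.all k (.eq l m))))) := by
  intro ins ρ h1 h2 h3 d
  have key : ∀ c, ¬ ev (.all k (.eq k c)) ins ρ →
      rnm (ins || decide (k = 0)) c = rnm ins c ∧ rnm ins c ≠ rnm ins k := by
    intro c hc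
    have h4 : rnm (ins || decide (k = 0)) c ≠ rnm ins k := by
      intro e
      apply hc
      intro d
      simp only [ev]
      rw [rnm_or, e]
    have h5 : rnm (ins || decide (k = 0)) c = rnm ins c := by
      by_cases hk : k = 0
      · subst hk
        have : c ≠ 1 := by
          rintro rfl
          simp [rnm] at h4
        simp [rnm, this]
      · simp [hk]
    exact ⟨h5, h5 ▸ h4⟩
  obtain ⟨a1, a2⟩ := key l h1
  obtain ⟨b1, b2⟩ := key m h2
  simp only [ev] at h3 ⊢
  rw [a1, b1, Function.update_of_ne a2, Function.update_of_ne b2]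
  exact h3

lemma step_sound (P : List MF) (Ξ : Scheme) (hΞ : Ξ ∈ Sys) (hs : Finset MF) (c : MF)
    (hI : Ξ.Inst ⟨hs, c, proofDV ax_ALLcomm P⟩) (hV : ∀ h ∈ hs, Vd h) : Vd c := by
  obtain ⟨σ, hL, hh, hc, hd⟩ := hI
  simp only at hh hc hd
  subst hh hc
  simp only [Sys, TMM, Set.mem_union, Set.mem_sdiff, Set.mem_insert_iff,
    Set.mem_singleton_iff] at hΞ
  rcases hΞ with ⟨h, hn⟩ | rfl
  · rcases h with rfl | rfl | rfl | rfl | rfl | rfl | rfl | rfl | rfl | rfl | rfl | rfl | rfl |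
      rfl | rfl | rfl | rfl | rfl
    · -- mp
      have h1 : Vd (σ.fm 0) := hV _ (by simp [ax_mp, MF.substMF])
      have h2 : Vd (.imp (σ.fm 0) (σ.fm 1)) := hV _ (by simp [ax_mp, MF.substMF])
      intro ins ρ
      exact h2 ins ρ (h1 ins ρ)
    · intro ins ρ
      simp only [ax_minimp, MF.substMF, ev]
      tauto
    · intro ins ρ
      simp only [ax_peirce, MF.substMF, ev]
      tauto
    · intro ins ρ
      simp only [ax_contrap, MF.substMF, ev]
      tauto
    · intro ins ρ
      simp only [ax_notelim, MF.substMF, ev]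
      tauto
    · -- gen
      have h1 : Vd (σ.fm 0) := hV _ (by simp [ax_gen, MF.substMF])
      intro ins ρ d
      exact h1 _ _
    · intro ins ρ h1 h2 d
      exact h1 d (h2 d)
    · exact absurd rfl (fun e => hn (Or.inl e))
    · -- modal5
      intro ins ρ
      simp only [ax_modal5, MF.substMF, ev, rnm_or, Bool.or_assoc, Bool.or_self,
        Function.update_idem]
      exact fun h _ => h
    · -- vacGen
      refine vacGen_sound P (σ.vr 0) (σ.fm 0) ?_ ?_
      · intro hm
        have : MV.vr (σ.vr 0) ∈ σ.appMV (MV.vr 0) ∩ σ.appMV (MV.fm 0) := ⟨rfl, hm⟩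
        rw [hL (MV.vr 0) (MV.fm 0) rfl] at this
        exact this
      · intro m hm
        exact hd ⟨MV.vr 0, MV.fm 0, _, _, rfl, rfl, hm, rfl⟩
    · exact absurd rfl (fun e => hn (Or.inr (Or.inl e)))
    · intro ins ρ
      rfl
    · intro ins ρ
      exact fun h => h.symm
    · intro ins ρ
      exact fun h h' => h.trans h'
    · exact denot_sound P _ _ (legit_vars σ _ 0 1 hL rfl) (hd (map_vars σ _ 0 1 rfl))
    · exact subst_sound P _ _ _ (legit_vars σ _ 0 1 hL (Or.inl rfl))
        (hd (map_vars σ _ 0 1 (Or.inl rfl)))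
    · exact absurd rfl (fun e => hn (Or.inr (Or.inr e)))
    · exact genEq_sound _ _ _
  · exact comm_sound P _ _ _ (legit_vars σ _ 0 1 hL rfl) (hd (map_vars σ _ 0 1 rfl))

lemma ALLcomm_not_Vd : ¬ Vd ax_ALLcomm.concl := by
  intro h
  have h1 := h false (fun _ => true)
  simp [ax_ALLcomm, ev, rnm] at h1

lemma proof_sound (P : List MF) (hP : IsProof Sys ax_ALLcomm P) :
    ∀ (k : ℕ) (hk : k < P.length), Vd (P.get ⟨k, hk⟩) := by
  intro k
  induction k using Nat.strong_induction_on with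
  | _ k ih =>
    intro hk
    rcases hP.2.2 k hk with h | ⟨hs, hprev, Ξ, hΞ, hI⟩
    · simp [ax_ALLcomm] at h
    · refine step_sound P Ξ hΞ hs _ hI fun h hh => ?_
      obtain ⟨l, hl, rfl⟩ := hprev h hh
      exact ih l hl _

lemma not_provable_Sys : ¬ Provable Sys ax_ALLcomm := by
  rintro ⟨P, hP⟩
  have hmem : ax_ALLcomm.concl ∈ P := List.mem_of_getLast? hP.2.1
  obtain ⟨n, hn, he⟩ := List.mem_iff_getElem.1 hmem
  apply ALLcomm_not_Vd
  rw [← he]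
  exact proof_sound P hP n hn


/-- In TMM ∖ {spec, ALLeq}, the scheme ALLcomm cannot be weakened by adding
the DV condition {x,y}: it is not provable even from the other axiom schemes
together with the weakened ALLcomm′; in particular, it is independent, i.e.,
not provable from TMM ∖ {spec, ALLcomm, ALLeq}. -/
theorem ALLcomm_cannot_be_weakened :
    ¬ Provable ((TMM \ {ax_spec, ax_ALLcomm, ax_ALLeq}) ∪ {ax_ALLcomm'}) ax_ALLcomm ∧
    ¬ Provable (TMM \ {ax_spec, ax_ALLcomm, ax_ALLeq}) ax_ALLcomm := by
  refine ⟨not_provable_Sys, ?_⟩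
  rintro ⟨P, h1, h2, h3⟩
  refine not_provable_Sys ⟨P, h1, h2, fun k hk => ?_⟩
  rcases h3 k hk with h | ⟨hs, hp, Ξ, hΞ, hI⟩
  · exact Or.inl h
  · exact Or.inr ⟨hs, hp, Ξ, Or.inl hΞ, hI⟩
end

section
/- The hypothesis-free scheme with conclusion ∀x x≡y → x≡y (x, y distinct variable metavariables, no DV conditions) is true but not semisupertrue: its {x,y}-transform ∀x x≡x → x≡y is not true. -/
set_option autoImplicit false

/-- The scheme ∀x x≡y → x≡y (no DV conditions) is true but not semisupertrue:
its {x,y}-transform ∀x x≡x → x≡y is not true. -/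
theorem spec_instance_not_semisupertrue :
    Scheme.IsTrue ⟨∅, .imp (.all 0 (.eq 0 1)) (.eq 0 1), ∅⟩ ∧
    ¬ Scheme.Semisupertrue ⟨∅, .imp (.all 0 (.eq 0 1)) (.eq 0 1), ∅⟩ ∧
    MF.stransform 0 1 (.imp (.all 0 (.eq 0 1)) (.eq 0 1)) =
      .imp (.all 0 (.eq 0 0)) (.eq 0 1) ∧
    ¬ Scheme.IsTrue ⟨∅, MF.stransform 0 1 (.imp (.all 0 (.eq 0 1)) (.eq 0 1)), ∅⟩ := by
  have key : ¬ Scheme.IsTrue ⟨∅, MF.stransform 0 1 (.imp (.all 0 (.eq 0 1)) (.eq 0 1)), ∅⟩ := by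
    intro h
    have h1 := h ⟨id, fun _ => .eq 0 0⟩ (fun _ _ hm => hm.elim) ℕ ⟨0⟩
      (fun _ hh => absurd hh (Finset.notMem_empty _)) id
    have h2 : (0 : ℕ) = 1 := h1 (fun _ => rfl)
    exact absurd h2 (by decide)
  have tr : Scheme.IsTrue ⟨∅, .imp (.all 0 (.eq 0 1)) (.eq 0 1), ∅⟩ := by
    intro τ _ D _ _ ρ h
    have h1 := h (ρ (τ.vr 0))
    rw [Function.update_eq_self] at h1
    exact h1
  refine ⟨tr, ?_, by decide, key⟩
  intro hs
  exact key (hs.2 _ (Or.inl rfl) ⟨fun _ hh => absurd hh (Finset.notMem_empty _), trivial, trivial⟩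
    (fun _ hh => absurd hh (Finset.notMem_empty _)) _ (Or.inl rfl) 0 1 (fun hm => hm.elim))
end
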